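/- Assume the P-ideal Dichotomy (PID) and that the bounding number 𝔟 equals ℵ₂. Then every hereditarily separable subspace of a compact Hausdorff sequential space is hereditarily Lindelöf. -/

import Mathlib

universe u

/-- The P-ideal Dichotomy (PID): for every uncountable set `X` and every P-ideal `I` of countable
subsets of `X` (downward closed, and such that every countable subfamily is almost included in a
single member), either there is an uncountable `A ⊆ X` all of whose countable subsets are in `I`,
or `X` is a countable union of sets orthogonal to `I`. -/
def PID : Prop :=
  ∀ (X : Type u), Uncountable X → ∀ I : Set (Set X),
    (∀ s ∈ I, s.Countable) →
    (∀ s ∈ I, ∀ t ⊆ s, t ∈ I) →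
    (∀ f : ℕ → Set X, (∀ n, f n ∈ I) → ∃ J ∈ I, ∀ n, (f n \ J).Finite) →
    (∃ A : Set X, ¬ A.Countable ∧ ∀ B ⊆ A, B.Countable → B ∈ I) ∨
    (∃ B : ℕ → Set X, (⋃ n, B n) = Set.univ ∧ ∀ n, ∀ s ∈ I, (B n ∩ s).Finite)

/-- `f ≤* g`: `f` is eventually dominated by `g`. -/
def EvDominated (f g : ℕ → ℕ) : Prop := ∀ᶠ n in Filter.atTop, f n ≤ g n

/-- The bounding number `𝔟`: the least cardinality of a family `F ⊆ ω^ω` unbounded with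
respect to eventual domination. -/
noncomputable def boundingNumber : Cardinal.{0} :=
  sInf { c : Cardinal.{0} | ∃ F : Set (ℕ → ℕ), Cardinal.mk F = c ∧
    ∀ g : ℕ → ℕ, ∃ f ∈ F, ¬ EvDominated f g }

open Set Filter Topology in
lemma exists_bound (hb : boundingNumber = Cardinal.aleph 2) {ι : Type u}
    (hι : Cardinal.mk ι ≤ Cardinal.aleph 1) (f : ι → ℕ → ℕ) :
    ∃ g : ℕ → ℕ, ∀ i, ∀ᶠ n in atTop, f i n ≤ g n := by
  by_contra hcon
  push Not at hcon
  have h1 : boundingNumber ≤ Cardinal.mk (range f) := by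
    apply csInf_le'
    refine ⟨range f, rfl, fun g => ?_⟩
    obtain ⟨i, hi⟩ := hcon g
    exact ⟨f i, mem_range_self i, by
      unfold EvDominated
      rw [not_eventually]
      simpa using hi⟩
  have h2 := Cardinal.mk_range_le_lift (f := f)
  have h3 : Cardinal.lift.{u} (Cardinal.mk (range f)) ≤ Cardinal.aleph 1 := by
    refine h2.trans ?_
    have := Cardinal.lift_le.{0}.2 hι
    simpa using this
  have h4 : Cardinal.mk (range f) ≤ Cardinal.aleph 1 := by
    have : Cardinal.lift.{u} (Cardinal.mk (range f)) ≤ Cardinal.lift.{u} (Cardinal.aleph.{0} 1) := by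
      simpa using h3
    exact Cardinal.lift_le.1 this
  rw [hb] at h1
  have h5 := h1.trans h4
  rw [Cardinal.aleph_le_aleph] at h5
  exact absurd h5 (by norm_num)

open Set Filter Topology in
lemma pideal (hb : boundingNumber = Cardinal.aleph 2) {ι : Type u}
    (hι : Cardinal.mk ι ≤ Cardinal.aleph 1) (V : ι → Set ι) (f : ℕ → Set ι)
    (hf : ∀ n, (f n).Countable ∧ ∀ i, (f n ∩ V i).Finite) :
    ∃ J : Set ι, (J.Countable ∧ ∀ i, (J ∩ V i).Finite) ∧ ∀ n, (f n \ J).Finite := by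
  have he : ∀ n, ∃ e : ι → ℕ, InjOn e (f n) := fun n => countable_iff_exists_injOn.1 (hf n).1
  choose e he using he
  have hF : ∀ i n, ∃ m, ∀ j ∈ f n ∩ V i, e n j ≤ m := by
    intro i n
    obtain ⟨m, hm⟩ := (((hf n).2 i).image (e n)).bddAbove
    exact ⟨m, fun j hj => hm (mem_image_of_mem _ hj)⟩
  choose F hF using hF
  obtain ⟨g, hg⟩ := exists_bound hb hι F
  refine ⟨⋃ n, {j ∈ f n | g n < e n j}, ⟨?_, ?_⟩, ?_⟩
  · exact countable_iUnion fun n => (hf n).1.mono (fun j hj => hj.1)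
  · intro i
    obtain ⟨N, hN⟩ := eventually_atTop.1 (hg i)
    have : (⋃ n ∈ Iio N, f n ∩ V i).Finite :=
      (finite_Iio N).biUnion fun n _ => (hf n).2 i
    refine this.subset ?_
    rintro j ⟨hj, hjV⟩
    obtain ⟨n, hjn, hlt⟩ := mem_iUnion.1 hj
    simp only [mem_iUnion]
    refine ⟨n, ?_, hjn, hjV⟩
    by_contra hn
    have h1 := hN n (not_lt.1 hn)
    have h2 := hF i n j ⟨hjn, hjV⟩
    omega
  · intro n
    have : (e n '' (f n \ ⋃ n, {j ∈ f n | g n < e n j})).Finite := by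
      refine (finite_Iic (g n)).subset ?_
      rintro _ ⟨j, ⟨hj, hj'⟩, rfl⟩
      by_contra h
      exact hj' (mem_iUnion.2 ⟨n, hj, not_le.1 h⟩)
    exact this.of_finite_image ((he n).mono sdiff_subset)

open Set Filter Topology in
/-- Approximation of closure points by sequences modulo `ℵ₁` many open sets. -/
lemma approx (hb : boundingNumber = Cardinal.aleph 2) {ι : Type u}
    (hι : Cardinal.mk ι ≤ Cardinal.aleph 1) {X : Type u} [TopologicalSpace X] [SequentialSpace X]
    (V : ι → Set X) (W : Set X) (y : X) (hy : y ∈ closure W) :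
    ∃ w : ℕ → X, (∀ k, w k ∈ W) ∧ ∀ i, y ∉ closure (V i) → ∀ᶠ k in atTop, w k ∉ V i := by
  let T : Set X := {y | ∃ w : ℕ → X, (∀ k, w k ∈ W) ∧
    ∀ i, y ∉ closure (V i) → ∀ᶠ k in atTop, w k ∉ V i}
  have hT : IsSeqClosed T := by
    intro z y hz hzy
    choose w hwW hw using hz
    have hF : ∀ i n, ∃ K, z n ∉ closure (V i) → ∀ k ≥ K, w n k ∉ V i := by
      intro i n
      by_cases h : z n ∈ closure (V i)
      · exact ⟨0, fun h' => absurd h h'⟩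
      · obtain ⟨K, hK⟩ := eventually_atTop.1 (hw n i h)
        exact ⟨K, fun _ => hK⟩
    choose F hF using hF
    obtain ⟨g, hg⟩ := exists_bound hb hι F
    refine ⟨fun n => w n (g n), fun n => hwW n _, fun i hi => ?_⟩
    have h1 : ∀ᶠ n in atTop, z n ∈ (closure (V i))ᶜ :=
      hzy.eventually (isClosed_closure.isOpen_compl.mem_nhds hi)
    filter_upwards [h1, hg i] with n hn1 hn2
    exact hF i n hn1 _ hn2
  have hWT : W ⊆ T := fun x hx => ⟨fun _ => x, fun _ => hx, fun i hi =>
    Eventually.of_forall fun _ h => hi (subset_closure h)⟩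
  exact closure_minimal hWT hT.isClosed hy

open Set Filter Topology in
lemma exists_rightSep {X : Type u} [TopologicalSpace X] (Z : Set X) (hZ : ¬ IsLindelof Z) :
    ∃ (ι : Type u) (x : ι → X) (U : ι → Set X), Cardinal.mk ι = Cardinal.aleph 1 ∧
      (∀ i, x i ∈ Z) ∧ Function.Injective x ∧ (∀ i, IsOpen (U i) ∧ x i ∈ U i) ∧
      ∀ i, {j | x j ∈ U i}.Countable := by
  rw [isLindelof_iff_countable_subcover] at hZ
  push Not at hZ
  obtain ⟨κ, C, hCo, hZC, hC⟩ := hZ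
  have hc : ∀ z : X, ∃ k, z ∈ Z → z ∈ C k := by
    intro z
    by_cases hz : z ∈ Z
    · obtain ⟨k, hk⟩ := mem_iUnion.1 (hZC hz)
      exact ⟨k, fun _ => hk⟩
    · by_contra h
      push Not at h
      apply hC ∅ countable_empty
      intro z' hz'
      obtain ⟨k, hk⟩ := mem_iUnion.1 (hZC hz')
      exact absurd (h k).1 hz
  choose c hc using hc
  have hstep : ∀ S : Set X, ∃ z, S.Countable → z ∈ Z ∧ ∀ s ∈ S, z ∉ C (c s) := by
    intro S
    by_cases hS : S.Countable
    · have := hC (c '' S) (hS.image c)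
      obtain ⟨z, hz, hz'⟩ := not_subset.1 this
      refine ⟨z, fun _ => ⟨hz, fun s hs h => hz' ?_⟩⟩
      exact mem_biUnion (mem_image_of_mem c hs) h
    · obtain ⟨z, -, -⟩ := not_subset.1 (hC ∅ countable_empty)
      exact ⟨z, fun h => absurd h hS⟩
  choose p hp using hstep
  let ι : Type u := (Cardinal.aleph.{u} 1).ord.ToType
  have hcnt : ∀ i : ι, (Iio i).Countable := by
    intro i
    have h := Cardinal.mk_Iio_toType_ord_lt (c := Cardinal.aleph.{u} 1) i
    rw [← Cardinal.le_aleph0_iff_set_countable]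
    exact Order.lt_succ_iff.1 (h.trans_eq Cardinal.succ_aleph0.symm)
  let x : ι → X := (wellFounded_lt (α := ι)).fix fun i rec => p (range fun j : Iio i => rec j.1 j.2)
  have hx : ∀ i, x i = p (x '' Iio i) := by
    intro i
    have : x i = p (range fun j : Iio i => x j.1) := WellFounded.fix_eq _ _ i
    rw [this, image_eq_range]
  have hx' : ∀ i, x i ∈ Z ∧ ∀ s ∈ x '' Iio i, x i ∉ C (c s) := by
    intro i
    have := hp (x '' Iio i) ((hcnt i).image x)
    rwa [← hx i] at this
  have hmem : ∀ i, x i ∈ C (c (x i)) := fun i => hc _ (hx' i).1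
  have hsep : ∀ i j, i < j → x j ∉ C (c (x i)) := fun i j h =>
    (hx' j).2 _ (mem_image_of_mem x h)
  refine ⟨ι, x, fun i => C (c (x i)), by simp [ι], fun i => (hx' i).1, ?_,
    fun i => ⟨hCo _, hmem i⟩, ?_⟩
  · intro i j hij
    rcases lt_trichotomy i j with h | h | h
    · exact absurd (hij ▸ hmem i) (hsep i j h)
    · exact h
    · exact absurd (hij ▸ hmem j) (hsep j i h)
  · intro i
    refine ((hcnt i).union (countable_singleton i)).mono ?_
    intro j hj
    rcases lt_trichotomy i j with h | h | h
    · exact absurd hj (hsep i j h)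
    · exact Or.inr h.symm
    · exact Or.inl h

/-- PID together with `𝔟 = ℵ₂` implies that every hereditarily separable subspace of a compact
Hausdorff sequential space is hereditarily Lindelöf. -/
theorem pid_b_aleph2_hs_implies_hl (hPID : PID.{u})
    (hb : boundingNumber = Cardinal.aleph 2)
    (X : Type u) [TopologicalSpace X] [CompactSpace X] [T2Space X] [SequentialSpace X]
    (Y : Set X)
    (hHS : ∀ Z ⊆ Y, ∃ c ⊆ Z, c.Countable ∧ Z ⊆ closure c) :
    ∀ Z ⊆ Y, IsLindelof Z := by
  intro Z hZY
  by_contra hZ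
  obtain ⟨ι, x, U, hι, hxZ, hinj, hU, hUc⟩ := exists_rightSep Z hZ
  have hunc : Uncountable ι := by
    rw [← Cardinal.aleph0_lt_mk_iff, hι]
    exact Cardinal.aleph0_lt_aleph_one
  have hV : ∀ i, ∃ V : Set X, IsOpen V ∧ x i ∈ V ∧ closure V ⊆ U i := by
    intro i
    obtain ⟨V, hVo, hxV, hVU⟩ := normal_exists_closure_subset (isClosed_singleton (x := x i))
      (hU i).1 (Set.singleton_subset_iff.2 (hU i).2)
    exact ⟨V, hVo, hxV rfl, hVU⟩
  choose V hVo hxV hVU using hV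
  let I : Set (Set ι) := {s | s.Countable ∧ ∀ i, (s ∩ x ⁻¹' V i).Finite}
  have hPI := hPID ι hunc I (fun s hs => hs.1)
    (fun s hs t hts => ⟨hs.1.mono hts, fun i => (hs.2 i).subset
      (Set.inter_subset_inter_left _ hts)⟩)
    (fun f hf => pideal hb hι.le (fun i => x ⁻¹' V i) f hf)
  rcases hPI with ⟨A, hA, hAI⟩ | ⟨B, hB, hBI⟩
  · have hfin : ∀ i, (A ∩ x ⁻¹' V i).Finite := by
      intro i
      by_contra hinf
      let e := Set.Infinite.natEmbedding _ hinf
      obtain ⟨t, htA, hti, htc⟩ : ∃ t ⊆ A ∩ x ⁻¹' V i, t.Infinite ∧ t.Countable := by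
        refine ⟨Set.range fun n => (e n).1, ?_,
          Set.infinite_range_of_injective (Subtype.val_injective.comp e.injective),
          Set.countable_range _⟩
        rintro _ ⟨k, rfl⟩
        exact (e k).2
      have := (hAI t (fun j hj => (htA hj).1) htc).2 i
      rw [Set.inter_eq_left.2 (fun j hj => (htA hj).2)] at this
      exact hti this
    obtain ⟨c, hcA, hcc, hAc⟩ := hHS (x '' A) (by
      rintro _ ⟨i, -, rfl⟩
      exact hZY (hxZ i))
    apply hA
    have : x '' A ⊆ c := by
      rintro _ ⟨i, hi, rfl⟩
      by_contra hic
      have hmem := hAc (Set.mem_image_of_mem x hi)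
      have hF : (x '' ((A ∩ x ⁻¹' V i) \ {i})).Finite := ((hfin i).sdiff).image x
      have hopen : IsOpen (V i \ x '' ((A ∩ x ⁻¹' V i) \ {i})) :=
        (hVo i).sdiff hF.isClosed
      obtain ⟨z, ⟨hz1, hz2⟩, hzc⟩ := mem_closure_iff.1 hmem _ hopen ⟨hxV i, by
        rintro ⟨j, ⟨_, hj⟩, hji⟩
        exact hj (hinj hji)⟩
      obtain ⟨j, hjA, rfl⟩ := hcA hzc
      apply hz2
      refine ⟨j, ⟨⟨hjA, hz1⟩, ?_⟩, rfl⟩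
      rintro rfl
      exact hic hzc
    exact Set.countable_of_injective_of_countable_image hinj.injOn (hcc.mono this)
  · have hBn : ∃ n, ¬ (B n).Countable := by
      by_contra h
      push Not at h
      have := Set.countable_iUnion h
      rw [hB] at this
      exact Set.not_countable_univ this
    obtain ⟨n, hn⟩ := hBn
    have hy : ∃ y ∈ closure (x '' B n), ∀ i, y ∉ U i := by
      by_contra h
      push Not at h
      obtain ⟨t, ht⟩ := isClosed_closure.isCompact.elim_finite_subcover U (fun i => (hU i).1)
        (fun y hy => Set.mem_iUnion.2 (h y hy))
      apply hn
      refine (t.countable_toSet.biUnion fun i _ => hUc i).mono ?_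
      intro j hj
      have := ht (subset_closure (Set.mem_image_of_mem x hj))
      simpa using this
    obtain ⟨y, hyc, hyU⟩ := hy
    obtain ⟨w, hwB, hw⟩ := approx hb hι.le V (x '' B n) y hyc
    choose a haB haw using hwB
    have ha : ∀ i, ∃ K, ∀ k ≥ K, x (a k) ∉ V i := by
      intro i
      obtain ⟨K, hK⟩ := Filter.eventually_atTop.1 (hw i fun h => hyU i (hVU i h))
      exact ⟨K, fun k hk => by rw [haw]; exact hK k hk⟩
    have hI : Set.range a ∈ I := by
      refine ⟨Set.countable_range a, fun i => ?_⟩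
      obtain ⟨K, hK⟩ := ha i
      refine ((Set.finite_Iio K).image a).subset ?_
      rintro _ ⟨⟨k, rfl⟩, hk⟩
      refine ⟨k, ?_, rfl⟩
      by_contra hkK
      exact hK k (not_lt.1 hkK) hk
    have hfin := hBI n _ hI
    rw [Set.inter_eq_right.2 (by rintro _ ⟨k, rfl⟩; exact haB k)] at hfin
    choose K hK using ha
    obtain ⟨M, hM⟩ := (hfin.image K).bddAbove
    exact hK (a M) M (hM (Set.mem_image_of_mem K (Set.mem_range_self M))) (hxV (a M))
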